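/- arXiv:1212.0527 — 2 statements merged into one kernel-verified Lean document; each statement's English description precedes it below -/
import Mathlib

section
/- (Uniform Dawson–Gärtner theorem.) Let X be a Polish space, 𝐗 = X^{ℤ₊} with the Tikhonov topology, p_m : 𝐗 → X^m the projection onto the first m components, Y an arbitrary set, {𝜻_k(y), y ∈ Y} a family of sequences of random probability measures on 𝐗, and ζ_k^m(y) the image of 𝜻_k(y) under p_m. Suppose that for every integer m ≥ 1 the family {ζ_k^m(y), y ∈ Y} satisfies the uniform large deviation principle with a good rate function I_m : 𝒫(X^m) → [0,+∞]. Then the family {𝜻_k(y), y ∈ Y} satisfies the uniform large deviation principle with the good rate function 𝐈(σ) = sup_{m≥1} I_m(σ ∘ p_m^{-1}). -/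
open MeasureTheory Filter Topology
open scoped ENNReal NNReal

noncomputable section

/-- Large deviation principle, for a family of (outer) probabilities `prob k` of events about
random probability measures in a topological space `Z`, with rate function `I`:
`limsup k⁻¹ log ℙ{ζ_k ∈ F} ≤ -inf_F I` for closed `F` and
`liminf k⁻¹ log ℙ{ζ_k ∈ G} ≥ -inf_G I` for open `G`. -/
def LDPof {Z : Type*} [TopologicalSpace Z] (prob : ℕ → Set Z → ℝ≥0∞) (I : Z → ℝ≥0∞) : Prop :=
  (∀ F : Set Z, IsClosed F →
    Filter.limsup (fun k : ℕ => (((k : ℝ)⁻¹ : ℝ) : EReal) * ENNReal.log (prob k F)) atTop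
      ≤ -(⨅ σ ∈ F, (I σ : EReal))) ∧
  (∀ G : Set Z, IsOpen G →
    -(⨅ σ ∈ G, (I σ : EReal))
      ≤ Filter.liminf (fun k : ℕ => (((k : ℝ)⁻¹ : ℝ) : EReal) * ENNReal.log (prob k G)) atTop)

/-- A good rate function: lower semicontinuous with compact level sets. -/
def GoodRate {Z : Type*} [TopologicalSpace Z] (I : Z → ℝ≥0∞) : Prop :=
  LowerSemicontinuous I ∧ ∀ c : ℝ≥0∞, c ≠ ⊤ → IsCompact {σ : Z | I σ ≤ c}

/-- Pushforward of a probability measure on the path space `ℕ → X` under the projection to the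
first `m` coordinates. -/
def projPM {X : Type*} [MeasurableSpace X] (m : ℕ) (σ : ProbabilityMeasure (ℕ → X)) :
    ProbabilityMeasure (Fin m → X) :=
  σ.map (f := fun (x : ℕ → X) (i : Fin m) => x i)
    (Measurable.aemeasurable (measurable_pi_lambda (fun (x : ℕ → X) (i : Fin m) => x i)
      (fun i => measurable_pi_apply (i : ℕ))))

/-- Uniform large deviation principle for a family of random probability measures indexed by a
parameter set `Y`: for every Borel `Γ`,
`-I(int Γ) ≤ liminf k⁻¹ log inf_y ℙ{ζ_k(y) ∈ Γ}` and
`limsup k⁻¹ log sup_y ℙ{ζ_k(y) ∈ Γ} ≤ -I(cl Γ)`. -/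
def UnifLDPof {Z : Type*} [TopologicalSpace Z]
    (probInf probSup : ℕ → Set Z → ℝ≥0∞) (I : Z → ℝ≥0∞) : Prop :=
  ∀ Γ : Set Z,
    (-(⨅ σ ∈ interior Γ, (I σ : EReal))
        ≤ Filter.liminf
            (fun k : ℕ => (((k : ℝ)⁻¹ : ℝ) : EReal) * ENNReal.log (probInf k Γ)) atTop) ∧
    (Filter.limsup
        (fun k : ℕ => (((k : ℝ)⁻¹ : ℝ) : EReal) * ENNReal.log (probSup k Γ)) atTop
      ≤ -(⨅ σ ∈ closure Γ, (I σ : EReal)))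

/-!
Dawson–Gärtner holds for any directed projective limit `Z` of spaces `E i`. Cylinders over a single
`E i` form a basis of the topology of `Z`, which gives the lower bound. Comparing the lower bound on
`E i` with the upper bound on `E j` shows that the rate functions decrease along the bonding maps
`E i → E j`. Hence, for finite `a`, the compact sets `closure (p i '' Γ) ∩ {I i ≤ a}` form a
projective system; if all of them are nonempty, then so is their limit, which is contained in
`closure Γ ∩ {𝐈 ≤ a}`. This gives the upper bound.

To see that `𝒫(X^ℕ)` is the projective limit of the `𝒫(X^m)`, map a measure to the family of its
marginals. This map is continuous and injective, and it is proper by Prokhorov's theorem, because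
measures on a countable product are tight as soon as each family of marginals is; so it is a closed
embedding.
-/

/-- The exponential-scale size `k⁻¹ log a` of a probability `a`. For `k = 0` it is
`0 * log a = 0`. -/
def scaledLog (k : ℕ) (a : ℝ≥0∞) : EReal :=
  (((k : ℝ)⁻¹ : ℝ) : EReal) * ENNReal.log a

theorem scaledLog_mono (k : ℕ) : Monotone (scaledLog k) := fun _ _ hab =>
  mul_le_mul_of_nonneg_left (ENNReal.log_monotone hab)
    (EReal.coe_nonneg.2 (inv_nonneg.2 k.cast_nonneg))

section UniformLDP

variable {Z : Type*} [TopologicalSpace Z] {probInf probSup : ℕ → Set Z → ℝ≥0∞} {I : Z → ℝ≥0∞}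

theorem UnifLDPof.neg_rate_le_liminf (h : UnifLDPof probInf probSup I) {U : Set Z}
    (hU : IsOpen U) {z : Z} (hz : z ∈ U) :
    -(I z : EReal) ≤ liminf (fun k => scaledLog k (probInf k U)) atTop :=
  (EReal.neg_le_neg_iff.2 (iInf₂_le z (hU.interior_eq.symm ▸ hz))).trans (h U).1

theorem UnifLDPof.limsup_le_neg_iInf (h : UnifLDPof probInf probSup I) (Γ : Set Z) :
    limsup (fun k => scaledLog k (probSup k Γ)) atTop ≤ -(⨅ z ∈ closure Γ, (I z : EReal)) :=
  (h Γ).2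

/-- Over an empty parameter set, `⨅ y, ℙ{ζ_k(y) ∈ Γ}` is `⊤` and `⨆ y, ℙ{ζ_k(y) ∈ Γ}` is `0`. -/
theorem unifLDPof_top_zero (I : Z → ℝ≥0∞) : UnifLDPof (fun _ _ => ⊤) (fun _ _ => 0) I := by
  have inv_pos_eventually : ∀ᶠ k : ℕ in atTop, (0 : ℝ) < (k : ℝ)⁻¹ := by
    filter_upwards [eventually_gt_atTop 0] with k hk
    positivity
  refine fun Γ => ⟨?_, ?_⟩
  · refine le_top.trans (le_liminf_of_le (h := ?_))
    filter_upwards [inv_pos_eventually] with k hk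
    rw [ENNReal.log_top, EReal.coe_mul_top_of_pos hk]
  · refine (limsup_le_of_le (h := ?_)).trans bot_le
    filter_upwards [inv_pos_eventually] with k hk
    rw [ENNReal.log_zero, EReal.coe_mul_bot_of_pos hk]

/-- A neighbourhood of `f z` on which `I'` exceeds `c` pulls back to a neighbourhood of `z`; the
lower bound for the latter is at most the upper bound for the former. -/
theorem UnifLDPof.rate_comp_le {Z' : Type*} [TopologicalSpace Z'] [RegularSpace Z']
    {probInf' probSup' : ℕ → Set Z' → ℝ≥0∞} {I' : Z' → ℝ≥0∞} {f : Z → Z'}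
    (h : UnifLDPof probInf probSup I) (h' : UnifLDPof probInf' probSup' I')
    (hf : Continuous f) (hI' : LowerSemicontinuous I')
    (hprob : ∀ k U, probInf k (f ⁻¹' U) ≤ probSup' k U) (z : Z) :
    I' (f z) ≤ I z := by
  refine le_of_forall_lt_imp_le_of_dense fun c hc => ?_
  obtain ⟨W, hW, hW_closed, hWc⟩ := exists_mem_nhds_isClosed_subset (hI' (f z) c hc)
  obtain ⟨U, hUW, hU, hzU⟩ := mem_nhds_iff.1 hW
  have lt_rate_on_closure : ∀ z' ∈ closure U, c < I' z' := fun z' hz' =>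
    hWc (closure_minimal hUW hW_closed hz')
  have neg_le_neg : -(I z : EReal) ≤ -(c : EReal) :=
    calc -(I z : EReal)
      _ ≤ liminf (fun k => scaledLog k (probInf k (f ⁻¹' U))) atTop :=
        h.neg_rate_le_liminf (hU.preimage hf) hzU
      _ ≤ liminf (fun k => scaledLog k (probSup' k U)) atTop :=
        liminf_le_liminf (.of_forall fun k => scaledLog_mono k (hprob k U))
      _ ≤ limsup (fun k => scaledLog k (probSup' k U)) atTop := liminf_le_limsup
      _ ≤ -(⨅ z' ∈ closure U, (I' z' : EReal)) := h'.limsup_le_neg_iInf U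
      _ ≤ -(c : EReal) := EReal.neg_le_neg_iff.2 <| le_iInf₂ fun z' hz' =>
        EReal.coe_ennreal_le_coe_ennreal_iff.2 (lt_rate_on_closure z' hz').le
  exact EReal.coe_ennreal_le_coe_ennreal_iff.1 (EReal.neg_le_neg_iff.1 neg_le_neg)

end UniformLDP

/-- `Z` is the projective limit of the spaces `E i` along the bonding maps `q`, with surjective
projections `p i : Z → E i`. Instead of asking that the image of `Z` in `∏ i, E i` be the set of all
compatible families, we ask that it be closed: for a directed index set and surjective projections
every compatible family is a limit of points of the image. -/
structure IsSurjectiveProjLimit {ι Z : Type*} [Preorder ι] [TopologicalSpace Z] {E : ι → Type*}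
    [∀ i, TopologicalSpace (E i)] (p : ∀ i, Z → E i) (q : ∀ ⦃j i⦄, j ≤ i → E i → E j) : Prop where
  continuous_bond : ∀ ⦃j i⦄ (hji : j ≤ i), Continuous (q hji)
  bond_proj : ∀ ⦃j i⦄ (hji : j ≤ i) (z : Z), q hji (p i z) = p j z
  surjective_proj : ∀ i, Function.Surjective (p i)
  isClosedEmbedding : IsClosedEmbedding fun z i => p i z

namespace IsSurjectiveProjLimit

variable {ι Z : Type*} [Preorder ι] [TopologicalSpace Z] {E : ι → Type*}
  [∀ i, TopologicalSpace (E i)] {p : ∀ i, Z → E i} {q : ∀ ⦃j i⦄, j ≤ i → E i → E j}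
  {I : ∀ i, E i → ℝ≥0∞} {probInf probSup : ℕ → Set Z → ℝ≥0∞}

theorem continuous_proj (hp : IsSurjectiveProjLimit p q) (i : ι) : Continuous (p i) :=
  (continuous_apply i).comp hp.isClosedEmbedding.continuous

theorem goodRate_iSup (hp : IsSurjectiveProjLimit p q) (hgood : ∀ i, GoodRate (I i)) :
    GoodRate fun z => ⨆ i, I i (p i z) := by
  refine ⟨lowerSemicontinuous_iSup fun i => (hgood i).1.comp (hp.continuous_proj i),
    fun c hc => ?_⟩
  have level_eq : {z | ⨆ i, I i (p i z) ≤ c} =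
      (fun z i => p i z) ⁻¹' Set.univ.pi fun i => {x | I i x ≤ c} := by
    ext z
    simp
  rw [level_eq]
  exact hp.isClosedEmbedding.isCompact_preimage (isCompact_univ_pi fun i => (hgood i).2 c hc)

section Directed

variable [IsDirectedOrder ι] [Nonempty ι]

theorem exists_isOpen_preimage_proj_subset (hp : IsSurjectiveProjLimit p q) {z : Z} {G : Set Z}
    (hG : G ∈ 𝓝 z) : ∃ i, ∃ U : Set (E i), IsOpen U ∧ p i z ∈ U ∧ p i ⁻¹' U ⊆ G := by
  have nhds_eq : 𝓝 z = ⨅ i, comap (p i) (𝓝 (p i z)) := by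
    rw [hp.isClosedEmbedding.nhds_eq_comap, nhds_pi, Filter.pi, comap_iInf]
    simp only [comap_comap, Function.comp_def, Function.eval]
  have directed : Directed (· ≥ ·) fun i => comap (p i) (𝓝 (p i z)) := by
    refine directed_of_isDirected_le fun j i hji => ?_
    have proj_eq : p j = q hji ∘ p i := funext fun w => (hp.bond_proj hji w).symm
    rw [← hp.bond_proj hji z, proj_eq, ← comap_comap]
    exact comap_mono ((hp.continuous_bond hji).tendsto _).le_comap
  rw [nhds_eq, mem_iInf_of_directed directed] at hG
  obtain ⟨i, V, hV, hVG⟩ := hG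
  obtain ⟨U, hUV, hU, hzU⟩ := mem_nhds_iff.1 hV
  exact ⟨i, U, hU, hzU, (Set.preimage_mono hUV).trans hVG⟩

theorem mem_closure_of_forall_proj_mem_closure (hp : IsSurjectiveProjLimit p q) {z : Z} {Γ : Set Z}
    (hz : ∀ i, p i z ∈ closure (p i '' Γ)) : z ∈ closure Γ := by
  refine mem_closure_iff_nhds.2 fun G hG => ?_
  obtain ⟨i, U, hU, hzU, hUG⟩ := hp.exists_isOpen_preimage_proj_subset hG
  obtain ⟨_, hwU, w, hw, rfl⟩ := mem_closure_iff.1 (hz i) U hU hzU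
  exact ⟨w, hUG hwU, hw⟩

theorem exists_forall_proj_mem (hp : IsSurjectiveProjLimit p q) {C : ∀ i, Set (E i)}
    (hC : ∀ i, IsCompact (C i)) (hne : ∀ i, (C i).Nonempty)
    (hq : ∀ ⦃j i⦄ (hji : j ≤ i), Set.MapsTo (q hji) (C i) (C j)) :
    ∃ z, ∀ i, p i z ∈ C i := by
  have exists_lift : ∀ i, ∃ z, p i z ∈ C i := fun i => by
    obtain ⟨x, hx⟩ := hne i
    obtain ⟨z, rfl⟩ := hp.surjective_proj i x
    exact ⟨z, hx⟩
  choose s hs using exists_lift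
  let 𝒰 : Ultrafilter ι := Ultrafilter.of atTop
  have eventually_mem : ∀ j, ∀ᶠ i in (𝒰 : Filter ι), p j (s i) ∈ C j := fun j =>
    Ultrafilter.of_le atTop <| (eventually_ge_atTop j).mono fun i hji =>
      hp.bond_proj hji (s i) ▸ hq hji (hs i)
  choose t htC ht using fun j =>
    (hC j).ultrafilter_le_nhds' (𝒰.map fun i => p j (s i)) (eventually_mem j)
  have limit_mem_range : t ∈ Set.range fun z i => p i z :=
    hp.isClosedEmbedding.isClosed_range.mem_of_tendsto
      (tendsto_pi_nhds.2 ht : Tendsto (fun i j => p j (s i)) 𝒰 (𝓝 t))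
      (.of_forall fun i => Set.mem_range_self (s i))
  obtain ⟨z, rfl⟩ := limit_mem_range
  exact ⟨z, htC⟩

theorem exists_mem_closure_iSup_rate_le (hp : IsSurjectiveProjLimit p q)
    (hgood : ∀ i, GoodRate (I i)) (hI : ∀ ⦃j i⦄ (hji : j ≤ i) (x : E i), I j (q hji x) ≤ I i x)
    {Γ : Set Z} {a : ℝ≥0∞} (ha : a ≠ ⊤) (hΓ : ∀ i, ∃ x ∈ closure (p i '' Γ), I i x ≤ a) :
    ∃ z ∈ closure Γ, ⨆ i, I i (p i z) ≤ a := by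
  have mapsTo_bond : ∀ ⦃j i⦄ (hji : j ≤ i), Set.MapsTo (q hji)
      (closure (p i '' Γ) ∩ {x | I i x ≤ a}) (closure (p j '' Γ) ∩ {x | I j x ≤ a}) := by
    rintro j i hji x ⟨hx, hxa⟩
    refine ⟨map_mem_closure (hp.continuous_bond hji) hx ?_, (hI hji x).trans hxa⟩
    rintro _ ⟨w, hw, rfl⟩
    exact ⟨w, hw, (hp.bond_proj hji w).symm⟩
  obtain ⟨z, hz⟩ := hp.exists_forall_proj_mem
    (fun i => ((hgood i).2 a ha).inter_left isClosed_closure) hΓ mapsTo_bond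
  exact ⟨z, hp.mem_closure_of_forall_proj_mem_closure fun i => (hz i).1, iSup_le fun i => (hz i).2⟩

theorem neg_iInf_interior_le_liminf (hp : IsSurjectiveProjLimit p q)
    (hmono : ∀ k, Monotone (probInf k))
    (hLDP : ∀ i, UnifLDPof (fun k F => probInf k (p i ⁻¹' F))
      (fun k F => probSup k (p i ⁻¹' F)) (I i)) (Γ : Set Z) :
    -(⨅ z ∈ interior Γ, ((⨆ i, I i (p i z) : ℝ≥0∞) : EReal)) ≤
      liminf (fun k => scaledLog k (probInf k Γ)) atTop := by
  refine EReal.neg_le.2 (le_iInf₂ fun z hz => EReal.neg_le.2 ?_)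
  obtain ⟨i, U, hU, hzU, hUΓ⟩ :=
    hp.exists_isOpen_preimage_proj_subset (mem_interior_iff_mem_nhds.1 hz)
  calc -((⨆ i, I i (p i z) : ℝ≥0∞) : EReal)
    _ ≤ -(I i (p i z) : EReal) := EReal.neg_le_neg_iff.2 <|
      EReal.coe_ennreal_le_coe_ennreal_iff.2 (le_iSup (fun i => I i (p i z)) i)
    _ ≤ liminf (fun k => scaledLog k (probInf k (p i ⁻¹' U))) atTop :=
      (hLDP i).neg_rate_le_liminf hU hzU
    _ ≤ liminf (fun k => scaledLog k (probInf k Γ)) atTop :=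
      liminf_le_liminf (.of_forall fun k => scaledLog_mono k (hmono k hUΓ))

theorem limsup_le_neg_iInf_closure (hp : IsSurjectiveProjLimit p q)
    (hgood : ∀ i, GoodRate (I i)) (hI : ∀ ⦃j i⦄ (hji : j ≤ i) (x : E i), I j (q hji x) ≤ I i x)
    (hmono : ∀ k, Monotone (probSup k))
    (hLDP : ∀ i, UnifLDPof (fun k F => probInf k (p i ⁻¹' F))
      (fun k F => probSup k (p i ⁻¹' F)) (I i)) (Γ : Set Z) :
    limsup (fun k => scaledLog k (probSup k Γ)) atTop ≤
      -(⨅ z ∈ closure Γ, ((⨆ i, I i (p i z) : ℝ≥0∞) : EReal)) := by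
  set L := limsup (fun k => scaledLog k (probSup k Γ)) atTop
  have iInf_rate_le : ∀ i, ⨅ x ∈ closure (p i '' Γ), (I i x : EReal) ≤ -L := fun i =>
    EReal.le_neg.2 <| le_trans
      (limsup_le_limsup <| .of_forall fun k =>
        scaledLog_mono k (hmono k (Set.subset_preimage_image (p i) Γ)))
      ((hLDP i).limsup_le_neg_iInf (p i '' Γ))
  refine EReal.le_neg.2 (le_of_forall_gt_imp_ge_of_dense fun b hb => ?_)
  have exists_rate_lt : ∀ i, ∃ x ∈ closure (p i '' Γ), (I i x : EReal) < b := fun i => by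
    simpa only [iInf_lt_iff, exists_prop] using (iInf_rate_le i).trans_lt hb
  obtain ⟨x, -, hxb⟩ := exists_rate_lt (Classical.arbitrary ι)
  lift b to ℝ≥0∞ using (EReal.coe_ennreal_nonneg _).trans hxb.le
  rcases eq_or_ne b ⊤ with rfl | hb_top
  · exact le_top
  obtain ⟨z, hz, hzb⟩ := hp.exists_mem_closure_iSup_rate_le hgood hI hb_top fun i =>
    (exists_rate_lt i).imp fun x hx => ⟨hx.1, (EReal.coe_ennreal_lt_coe_ennreal_iff.1 hx.2).le⟩
  exact (iInf₂_le z hz).trans (EReal.coe_ennreal_le_coe_ennreal_iff.2 hzb)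

theorem unifLDPof_iSup [∀ i, RegularSpace (E i)] (hp : IsSurjectiveProjLimit p q)
    (hgood : ∀ i, GoodRate (I i)) (hInf : ∀ k, Monotone (probInf k))
    (hSup : ∀ k, Monotone (probSup k)) (hle : ∀ k Γ, probInf k Γ ≤ probSup k Γ)
    (hLDP : ∀ i, UnifLDPof (fun k F => probInf k (p i ⁻¹' F))
      (fun k F => probSup k (p i ⁻¹' F)) (I i)) :
    UnifLDPof probInf probSup fun z => ⨆ i, I i (p i z) := by
  have rate_bond_le : ∀ ⦃j i⦄ (hji : j ≤ i) (x : E i), I j (q hji x) ≤ I i x := fun j i hji =>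
    (hLDP i).rate_comp_le (hLDP j) (hp.continuous_bond hji) (hgood j).1 fun k U => by
      simpa only [Set.preimage_preimage, hp.bond_proj] using hle k (p j ⁻¹' U)
  exact fun Γ => ⟨hp.neg_iInf_interior_le_liminf hInf hLDP Γ,
    hp.limsup_le_neg_iInf_closure hgood rate_bond_le hSup hLDP Γ⟩

end Directed

end IsSurjectiveProjLimit

theorem isTightMeasureSet_of_forall_map_eval {ι : Type*} [Countable ι] {X : ι → Type*}
    [∀ i, TopologicalSpace (X i)] [∀ i, MeasurableSpace (X i)] {S : Set (Measure (∀ i, X i))}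
    (hS : ∀ i, IsTightMeasureSet (Measure.map (Function.eval i) '' S)) : IsTightMeasureSet S := by
  simp only [isTightMeasureSet_iff_exists_isCompact_measure_compl_le, Set.forall_mem_image]
    at hS ⊢
  intro ε hε
  obtain ⟨δ, hδ, hδε⟩ := ENNReal.exists_pos_sum_of_countable' hε.ne' ι
  choose K hK hKδ using fun i => hS i (δ i) (hδ i)
  refine ⟨Set.univ.pi K, isCompact_univ_pi hK, fun μ hμ => ?_⟩
  calc μ (Set.univ.pi K)ᶜ
    _ = μ (⋃ i, Function.eval i ⁻¹' (K i)ᶜ) := by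
      rw [Set.pi_def]
      simp [Set.compl_iInter]
    _ ≤ ∑' i, μ (Function.eval i ⁻¹' (K i)ᶜ) := measure_iUnion_le _
    _ ≤ ∑' i, δ i := ENNReal.tsum_le_tsum fun i =>
      (Measure.le_map_apply (measurable_pi_apply i).aemeasurable _).trans (hKδ i hμ)
    _ ≤ ε := hδε.le

theorem isTightMeasureSet_of_isCompact {Z : Type*} [TopologicalSpace Z] [PolishSpace Z]
    [MeasurableSpace Z] [BorelSpace Z] {K : Set (ProbabilityMeasure Z)} (hK : IsCompact K) :
    IsTightMeasureSet {(μ : Measure Z) | μ ∈ K} := by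
  let := TopologicalSpace.upgradeIsCompletelyMetrizable Z
  exact isTightMeasureSet_of_isCompact_closure (hK.isClosed.closure_eq.symm ▸ hK)

section PathSpace

variable {X : Type*} [MeasurableSpace X]

/-- Pushforward of a probability measure on `X^m` under the projection to the first `j ≤ m`
coordinates: the bonding map through which `projPM j` factors over `projPM m`. -/
def projFinPM {j m : ℕ} (hjm : j ≤ m) (τ : ProbabilityMeasure (Fin m → X)) :
    ProbabilityMeasure (Fin j → X) :=
  τ.map (f := fun x i => x (Fin.castLE hjm i)) (Measurable.aemeasurable (by fun_prop))

theorem projFinPM_projPM {j m : ℕ} (hjm : j ≤ m) (σ : ProbabilityMeasure (ℕ → X)) :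
    projFinPM hjm (projPM m σ) = projPM j σ :=
  Subtype.ext (Measure.map_map (by fun_prop) (by fun_prop))

theorem projPM_surjective {m : ℕ} (hm : 1 ≤ m) :
    Function.Surjective (projPM (X := X) m) := by
  intro τ
  obtain ⟨u⟩ : Nonempty (Fin m → X) := (τ : Measure (Fin m → X)).nonempty_of_neZero
  let extend (v : Fin m → X) (i : ℕ) : X := if hi : i < m then v ⟨i, hi⟩ else u ⟨0, hm⟩
  have measurable_extend : Measurable extend := by
    refine measurable_pi_lambda _ fun i => ?_
    by_cases hi : i < m <;> simp only [extend, hi, dite_true, dite_false] <;> fun_prop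
  have restrict_extend : (fun (x : ℕ → X) (i : Fin m) => x i) ∘ extend = id := by
    ext v i
    simp [extend]
  refine ⟨τ.map measurable_extend.aemeasurable, Subtype.ext ?_⟩
  calc (τ.toMeasure.map extend).map (fun (x : ℕ → X) (i : Fin m) => x i)
    _ = τ.toMeasure.map id := by
      rw [Measure.map_map (by fun_prop) measurable_extend, restrict_extend]
    _ = τ.toMeasure := Measure.map_id

theorem projPM_jointly_injective :
    Function.Injective fun (σ : ProbabilityMeasure (ℕ → X)) (m : {m : ℕ // 1 ≤ m}) =>
      projPM (m : ℕ) σ := by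
  intro σ ν hσν
  have map_restrict_eq (J : Finset ℕ) :
      σ.toMeasure.map J.restrict = ν.toMeasure.map J.restrict := by
    obtain ⟨m, hJm⟩ : ∃ m, ∀ i ∈ J, i < m + 1 :=
      ⟨J.sup id, fun i hi => Nat.lt_succ_of_le (Finset.le_sup (f := id) hi)⟩
    let restrictFin (u : Fin (m + 1) → X) (i : J) : X := u ⟨i, hJm i i.2⟩
    have map_restrictFin (ρ : ProbabilityMeasure (ℕ → X)) :
        (projPM (m + 1) ρ).toMeasure.map restrictFin = ρ.toMeasure.map J.restrict :=
      Measure.map_map (by fun_prop) (by fun_prop)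
    rw [← map_restrictFin, ← map_restrictFin,
      show projPM (m + 1) σ = projPM (m + 1) ν from congrFun hσν ⟨m + 1, by lia⟩]
  have (J : Finset ℕ) : IsFiniteMeasure (ν.toMeasure.map J.restrict) := inferInstance
  exact Subtype.ext (IsProjectiveLimit.unique map_restrict_eq fun _ => rfl)

variable [TopologicalSpace X]

theorem projPM_continuous [SecondCountableTopology X] [BorelSpace X] (m : ℕ) :
    Continuous (projPM (X := X) m) :=
  ProbabilityMeasure.continuous_map (f := fun (x : ℕ → X) (i : Fin m) => x i) (by fun_prop)

theorem projFinPM_continuous [SecondCountableTopology X] [BorelSpace X] {j m : ℕ} (hjm : j ≤ m) :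
    Continuous (projFinPM (X := X) hjm) :=
  ProbabilityMeasure.continuous_map (f := fun (x : Fin m → X) i => x (Fin.castLE hjm i))
    (by fun_prop)

variable [PolishSpace X] [BorelSpace X]

theorem isCompact_forall_projPM_mem
    {K : ∀ m : {m : ℕ // 1 ≤ m}, Set (ProbabilityMeasure (Fin m → X))}
    (hK : ∀ m, IsCompact (K m)) :
    IsCompact {σ : ProbabilityMeasure (ℕ → X) | ∀ m, projPM m σ ∈ K m} := by
  let := TopologicalSpace.upgradeIsCompletelyMetrizable X
  set S := {σ : ProbabilityMeasure (ℕ → X) | ∀ m, projPM m σ ∈ K m}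
  have isClosed_S : IsClosed S := by
    simp only [S, Set.ofPred_forall]
    exact isClosed_iInter fun m => (hK m).isClosed.preimage (projPM_continuous m)
  rw [← isClosed_S.closure_eq]
  refine isCompact_closure_of_isTightMeasureSet (isTightMeasureSet_of_forall_map_eval fun i => ?_)
  refine ((isTightMeasureSet_of_isCompact (hK ⟨i + 1, by lia⟩)).map
    (continuous_apply (Fin.last i))).subset ?_
  rintro _ ⟨_, ⟨σ, hσ, rfl⟩, rfl⟩
  exact ⟨_, ⟨_, hσ _, rfl⟩, Measure.map_map (by fun_prop) (by fun_prop)⟩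

theorem projPM_isClosedEmbedding :
    IsClosedEmbedding fun (σ : ProbabilityMeasure (ℕ → X)) (m : {m : ℕ // 1 ≤ m}) =>
      projPM (m : ℕ) σ := by
  let := TopologicalSpace.upgradeIsCompletelyMetrizable X
  have continuous_projPM : Continuous fun (σ : ProbabilityMeasure (ℕ → X))
      (m : {m : ℕ // 1 ≤ m}) => projPM (m : ℕ) σ :=
    continuous_pi fun m => projPM_continuous m
  have isProperMap_projPM := isProperMap_iff_isCompact_preimage.2 ⟨continuous_projPM, fun C hC =>
    (isCompact_forall_projPM_mem fun m => hC.image (continuous_apply m)).of_isClosed_subset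
      (hC.isClosed.preimage continuous_projPM) fun σ hσ m => ⟨_, hσ, rfl⟩⟩
  exact .of_continuous_injective_isClosedMap continuous_projPM projPM_jointly_injective
    isProperMap_projPM.isClosedMap

theorem isSurjectiveProjLimit_projPM :
    IsSurjectiveProjLimit (fun m : {m : ℕ // 1 ≤ m} => projPM (X := X) m)
      fun _ _ hjm => projFinPM hjm where
  continuous_bond _ _ hjm := projFinPM_continuous hjm
  bond_proj _ _ hjm := projFinPM_projPM hjm
  surjective_proj m := projPM_surjective m.2
  isClosedEmbedding := projPM_isClosedEmbedding

end PathSpace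

theorem statement16_general {ι Z : Type*} [Preorder ι] [IsDirectedOrder ι] [Nonempty ι]
    [TopologicalSpace Z] {E : ι → Type*} [∀ i, TopologicalSpace (E i)] [∀ i, RegularSpace (E i)]
    {p : ∀ i, Z → E i} {q : ∀ ⦃j i⦄, j ≤ i → E i → E j} (hp : IsSurjectiveProjLimit p q)
    {Ω : Type*} [MeasurableSpace Ω] (P : Measure Ω) {Y : Type*} (ζ : ℕ → Y → Ω → Z)
    (I : ∀ i, E i → ℝ≥0∞) (hgood : ∀ i, GoodRate (I i))
    (hLDP : ∀ i, UnifLDPof (fun k F => ⨅ y : Y, P {ω | p i (ζ k y ω) ∈ F})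
      (fun k F => ⨆ y : Y, P {ω | p i (ζ k y ω) ∈ F}) (I i)) :
    GoodRate (fun z => ⨆ i, I i (p i z)) ∧
    UnifLDPof (fun k F => ⨅ y : Y, P {ω | ζ k y ω ∈ F})
      (fun k F => ⨆ y : Y, P {ω | ζ k y ω ∈ F}) (fun z => ⨆ i, I i (p i z)) := by
  refine ⟨hp.goodRate_iSup hgood, ?_⟩
  rcases isEmpty_or_nonempty Y with hY | hY
  · simpa only [iInf_of_empty, iSup_of_empty, bot_eq_zero] using unifLDPof_top_zero _
  · have prob_mono (k : ℕ) (y : Y) : Monotone fun F : Set Z => P {ω | ζ k y ω ∈ F} :=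
      fun _ _ hFG => measure_mono fun _ hω => hFG hω
    exact hp.unifLDPof_iSup hgood (fun k _ _ hFG => iInf_mono fun y => prob_mono k y hFG)
      (fun k _ _ hFG => iSup_mono fun y => prob_mono k y hFG) (fun _ _ => iInf_le_iSup) hLDP

/-- **Theorem 7.4 (uniform Dawson–Gärtner theorem)**: if for every `m ≥ 1` the projected
families `{ζ_k^m(y), y ∈ Y}` satisfy the uniform LDP with good rate functions `I_m`, then the
family `{𝜻_k(y), y ∈ Y}` satisfies the uniform LDP with the good rate function
`𝐈(σ) = sup_{m ≥ 1} I_m(σ ∘ p_m⁻¹)`. -/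
theorem statement16 {X : Type} [MetricSpace X] [PolishSpace X]
    [SecondCountableTopology X] [MeasurableSpace X] [BorelSpace X]
    {Ω : Type} [MeasurableSpace Ω] (P : Measure Ω) [IsProbabilityMeasure P]
    {Y : Type} (ζ : ℕ → Y → Ω → ProbabilityMeasure (ℕ → X))
    (I : (m : ℕ) → ProbabilityMeasure (Fin m → X) → ℝ≥0∞)
    (hgood : ∀ m : ℕ, 1 ≤ m → GoodRate (I m))
    (hLDP : ∀ m : ℕ, 1 ≤ m →
      UnifLDPof (fun k F => ⨅ y : Y, P {ω | projPM m (ζ k y ω) ∈ F})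
        (fun k F => ⨆ y : Y, P {ω | projPM m (ζ k y ω) ∈ F}) (I m)) :
    GoodRate (fun σ : ProbabilityMeasure (ℕ → X) =>
      ⨆ m : ℕ, ⨆ _ : 1 ≤ m, I m (projPM m σ)) ∧
    UnifLDPof (fun k F => ⨅ y : Y, P {ω | ζ k y ω ∈ F})
      (fun k F => ⨆ y : Y, P {ω | ζ k y ω ∈ F})
      (fun σ : ProbabilityMeasure (ℕ → X) =>
        ⨆ m : ℕ, ⨆ _ : 1 ≤ m, I m (projPM m σ)) := by
  simp only [iSup_subtype']
  exact statement16_general isSurjectiveProjLimit_projPM P ζ _ (fun m => hgood m m.2)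
    fun m => hLDP m m.2
end
end

section
/- (Lyapunov–Schmidt reduction.) Under Conditions (A)–(D), let b = (Σ_j b_j²)^{1/2}, and for N ≥ 1 write B_{R,b} = B_{H_N}(R) × B_{H_N^⊥}(b) and 𝐁_{R,b} = (B_{R,b})^{ℤ₀}, where ℤ₀ is the set of non-positive integers. Then for any R > 0 and κ > 0 there is an integer N* ≥ 1 such that for any N ≥ N* one can find a constant C > 0 and a continuous mapping 𝒲₀ : 𝐁_{R,b} → H_N^⊥, 𝐔 = (𝐯,𝛙) ↦ w₀, with the following properties. (Lipschitz continuity) For any 𝐔_i = (𝐯_i,𝛙_i) ∈ 𝐁_{R,b}, i = 1,2: ‖𝒲₀(𝐔₁) − 𝒲₀(𝐔₂)‖ ≤ C sup_{j≤0} e^{κj}(‖v_{1j} − v_{2j}‖ + ‖ψ_{1j} − ψ_{2j}‖). (Regularity) For each j ≤ 0, 𝒲₀(𝐯,𝛙) is continuously differentiable with respect to the coordinate (v_j, ψ_j) in B_{R,b}. (Reduction) Let r ≥ 0 be such that 𝒜(B_H(r)) ⊆ B_H(R) and let u ∈ 𝒜(B_H(r)) be written u = v₀ + 𝒲₀(𝐔)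 for some 𝐔 = (𝐯,𝛙) ∈ 𝐁_{R,b}; define T₀(𝐯,𝛙) = 𝖯_N S(v₀ + 𝒲₀(𝐯,𝛙)), T(𝐔) = (T₀(𝐔), 0), φ_k = 𝖯_N η_k, ψ_k = (I − 𝖯_N)η_k, and the Markov chain ϒ⁰ = 𝐔, ϒ^k = (ϒ^{k−1}, T(ϒ^{k−1}) + (φ_k, ψ_k)). Then ℙ{ϒ^k(𝐔) ∈ 𝐁_{R,b} for all k ≥ 0} = 1, and for any bounded measurable f : H^k → ℝ of the form f(u₁,…,u_k) = F(𝖯_N u₁,…,𝖯_N u_k) one has 𝔼_u f(u₁,…,u_k) = 𝔼_𝐔 𝐟(ϒ^k), where 𝐟(𝐯,𝛙) = F(v_{1−k},…,v₀) and 𝔼_u, 𝔼_𝐔 refer to the chains u_k = S(u_{k−1}) + η_k starting at u and ϒ^k starting at 𝐔, respectively. -/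
open MeasureTheory ProbabilityTheory Filter Topology BoundedContinuousFunction
open scoped ENNReal NNReal Pointwise

noncomputable section

/-- The sets `𝒜_k(B)`: `𝒜_0(B) = B`, `𝒜_k(B) = S(𝒜_{k-1}(B)) + 𝒦`. -/
def attain {H : Type*} [AddCommGroup H] (S : H → H) (K : Set H) (B : Set H) : ℕ → Set H
  | 0 => B
  | n + 1 => S '' attain S K B n + K

/-- The domain of attainability `𝒜(B)` from `B`: the closure of `⋃_k 𝒜_k(B)`. -/
def attainDom {H : Type*} [AddCommGroup H] [TopologicalSpace H]
    (S : H → H) (K : Set H) (B : Set H) : Set H :=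
  closure (⋃ n, attain S K B n)

variable {H : Type} [NormedAddCommGroup H] [InnerProductSpace ℝ H] [CompleteSpace H]

/-- The orthogonal projection `𝖯_N` onto the span of the first `N` vectors of an orthonormal
basis. -/
def projB (e : HilbertBasis ℕ ℝ H) (N : ℕ) (u : H) : H :=
  ∑ j ∈ Finset.range N, e.repr u j • (e j : H)

/-- Condition (A): regularity and stability. -/
def CondA (S : H → H) : Prop :=
  ContDiff ℝ 1 S ∧
  ∀ R r : ℝ, 0 < r → r < R →
    ∃ C : ℝ, 0 < C ∧ ∃ a : ℝ, 0 < a ∧ a < 1 ∧ ∃ n₀ : ℕ, 1 ≤ n₀ ∧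
      (∀ u₁ ∈ Metric.closedBall (0 : H) R, ∀ u₂ ∈ Metric.closedBall (0 : H) R,
          ‖S u₁ - S u₂‖ ≤ C * ‖u₁ - u₂‖) ∧
      ∀ u ∈ Metric.closedBall (0 : H) R, ∀ n : ℕ, n₀ ≤ n →
          ‖S^[n] u‖ ≤ max (a * ‖u‖) r

/-- Condition (B): dissipativity. -/
def CondB (S : H → H) (K : Set H) : Prop :=
  ∃ ρ : ℝ, 0 < ρ ∧ ∃ k₀ : ℝ → ℕ, Monotone k₀ ∧
    ∀ R : ℝ, 0 ≤ R → ∀ k : ℕ, k₀ R ≤ k →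
      attain S K (Metric.closedBall 0 R) k ⊆ Metric.closedBall (0 : H) ρ

/-- Condition (C): squeezing. -/
def CondC (S : H → H) (e : HilbertBasis ℕ ℝ H) : Prop :=
  ∀ R : ℝ, 0 < R → ∃ γ : ℕ → ℝ, (∀ N, 0 < γ N) ∧ Antitone γ ∧
    Tendsto γ atTop (𝓝 0) ∧
    ∀ N : ℕ, ∀ u₁ ∈ Metric.closedBall (0 : H) R, ∀ u₂ ∈ Metric.closedBall (0 : H) R,
      ‖(S u₁ - S u₂) - projB e N (S u₁ - S u₂)‖ ≤ γ N * ‖u₁ - u₂‖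

/-- Condition (D): structure of the noise, `η_k = ∑_j b_j ξ_{jk} e_j` with `∑ b_j² < ∞`,
independent scalar `ξ_{jk}` whose laws have Lipschitz densities `p_j` with `p_j(0) > 0` and
support in `[-1,1]`. -/
def CondD [MeasurableSpace H] {Ω : Type*} [MeasurableSpace Ω] (P : Measure Ω)
    (e : HilbertBasis ℕ ℝ H) (η : ℕ → Ω → H)
    (b : ℕ → ℝ) (ξ : ℕ → ℕ → Ω → ℝ) (p : ℕ → ℝ → ℝ) : Prop :=
  (∀ j, 0 ≤ b j) ∧ Summable (fun j => (b j) ^ 2) ∧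
  (∀ k ω, HasSum (fun j => (b j * ξ j k ω) • (e j : H)) (η k ω)) ∧
  (∀ j k, Measurable (ξ j k)) ∧
  iIndepFun (fun jk : ℕ × ℕ => ξ jk.1 jk.2) P ∧
  (∀ j k, Measure.map (ξ j k) P
      = (volume : Measure ℝ).withDensity fun x => ENNReal.ofReal (p j x)) ∧
  (∀ j, ∃ L : ℝ≥0, LipschitzWith L (p j)) ∧
  (∀ j, 0 < p j 0) ∧
  (∀ j, Function.support (p j) ⊆ Set.Icc (-1 : ℝ) 1)

/-- The trajectory `u_k = S(u_{k-1}) + η_k` of the random dynamical system issued from `u₀`. -/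
def traj {Ω : Type*} (S : H → H) (η : ℕ → Ω → H) (u₀ : Ω → H) : ℕ → Ω → H
  | 0 => u₀
  | k + 1 => fun ω => S (traj S η u₀ k ω) + η (k + 1) ω

/-- The (topological) support of a measure. -/
def msupp {X : Type*} [TopologicalSpace X] [MeasurableSpace X] (μ : Measure X) : Set X :=
  {x | ∀ U ∈ 𝓝 x, 0 < μ U}

/-- The occupation measures `ζ_k = k⁻¹ ∑_{n=0}^{k-1} δ_{x_n}` of a sequence. -/
def occ {X : Type*} [MeasurableSpace X] (x : ℕ → X) (k : ℕ) : ProbabilityMeasure X :=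
  if hk : k = 0 then ⟨Measure.dirac (x 0), Measure.dirac.isProbabilityMeasure⟩
  else
    ⟨(k : ℝ≥0∞)⁻¹ • ∑ n ∈ Finset.range k, Measure.dirac (x n), by
      refine ⟨?_⟩
      simp only [Measure.smul_apply, Measure.finset_sum_apply, measure_univ,
        Finset.sum_const, Finset.card_range, nsmul_eq_mul, mul_one, smul_eq_mul]
      exact ENNReal.inv_mul_cancel (Nat.cast_ne_zero.mpr hk) (ENNReal.natCast_ne_top k)⟩

/-- The closed "ball" `B_{R,b} = B_{H_N}(R) × B_{H_N^⊥}(b)`, realised inside `H × H`. -/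
def ballRB {H : Type} [NormedAddCommGroup H] [InnerProductSpace ℝ H] [CompleteSpace H]
    (e : HilbertBasis ℕ ℝ H) (N : ℕ) (R bb : ℝ) : Set (H × H) :=
  {x | ‖x.1‖ ≤ R ∧ projB e N x.1 = x.1 ∧ ‖x.2‖ ≤ bb ∧ projB e N x.2 = 0}

/-- The set `𝐁_{R,b} = (B_{R,b})^{ℤ₀}` of sequences (indexed by `n : ℕ`, `n` standing for the
index `j = -n ∈ ℤ₀`). -/
def ballSeq {H : Type} [NormedAddCommGroup H] [InnerProductSpace ℝ H] [CompleteSpace H]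
    (e : HilbertBasis ℕ ℝ H) (N : ℕ) (R bb : ℝ) : Set (ℕ → H × H) :=
  {U | ∀ n : ℕ, U n ∈ ballRB e N R bb}

/-- Prepending an element to a sequence over `ℤ₀`: `(𝐔, a)` has `a` at the index `0` and the
entries of `𝐔` shifted by one. -/
def consSeq {α : Type*} (a : α) (s : ℕ → α) : ℕ → α
  | 0 => a
  | n + 1 => s n

/-!
The high modes `w = (I - 𝖯_N) u` of a trajectory obey `w₀ = (I - 𝖯_N) S(v₋₁ + w₋₁) + ψ₀`, where `v`
are the low modes and `ψ` the high modes of the noise. By the squeezing condition `(I - 𝖯_N) S` is,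
for large `N`, a contraction with a constant `γ_N < e^{-κ}` on a given ball, so this recursion has a
unique bounded solution `w₀ = 𝒲₀(𝐯, 𝛙)`, the limit of the iterates started at `0`. Going `n` steps
into the past gains a factor `γ_N ^ n`, which beats `e^{κ n}`: hence the weighted Lipschitz bound.
The recursion involves a given coordinate in finitely many steps only, whence the regularity.
Finally, `v₀ + 𝒲₀(𝐯, 𝛙)` follows the original dynamics path by path, so the reduction is an almost
sure identity between the two chains and not merely an equality of laws.
-/

/-! ### Sequences of past values -/

section PastSequences

/-- The past `(U_j)_{j ≤ -1}` of a sequence over `ℤ₀`, the left inverse of `consSeq`. -/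
def tailSeq {α : Type*} (U : ℕ → α) : ℕ → α := fun n => U (n + 1)

@[simp]
lemma tailSeq_consSeq {α : Type*} (a : α) (U : ℕ → α) : tailSeq (consSeq a U) = U := rfl

@[simp]
lemma tailSeq_update_zero {α : Type*} (U : ℕ → α) (x : α) :
    tailSeq (Function.update U 0 x) = tailSeq U :=
  funext fun n => Function.update_of_ne n.succ_ne_zero x U

@[simp]
lemma tailSeq_update_succ {α : Type*} (U : ℕ → α) (n : ℕ) (x : α) :
    tailSeq (Function.update U (n + 1) x) = Function.update (tailSeq U) n x := by
  ext1 k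
  simp [tailSeq, Function.update_apply]

lemma apply_add_of_eq_consSeq {α : Type*} {Y : ℕ → ℕ → α} {a : ℕ → α}
    (hY : ∀ k, Y (k + 1) = consSeq (a k) (Y k)) (m j : ℕ) : Y (m + j) j = Y m 0 := by
  induction j with
  | zero => rfl
  | succ j ih => rw [← add_assoc, hY]; exact ih

variable {E : Type*} [NormedAddCommGroup E]

/-- The sequences over `ℤ₀` with values in the product of the closed balls of radii `R` and `b`. -/
def historyBall (E : Type*) [NormedAddCommGroup E] (R b : ℝ) : Set (ℕ → E × E) :=
  {U | ∀ n, U n ∈ Metric.closedBall (0 : E) R ×ˢ Metric.closedBall (0 : E) b}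

variable {R b κ : ℝ} {U U₁ U₂ : ℕ → E × E}

lemma norm_fst_le_of_mem_historyBall (hU : U ∈ historyBall E R b) (n : ℕ) : ‖(U n).1‖ ≤ R :=
  mem_closedBall_zero_iff.1 (hU n).1

lemma norm_snd_le_of_mem_historyBall (hU : U ∈ historyBall E R b) (n : ℕ) : ‖(U n).2‖ ≤ b :=
  mem_closedBall_zero_iff.1 (hU n).2

lemma tailSeq_mem_historyBall (hU : U ∈ historyBall E R b) : tailSeq U ∈ historyBall E R b :=
  fun n => hU (n + 1)

lemma update_mem_historyBall (hU : U ∈ historyBall E R b) (n : ℕ) {x : E × E}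
    (hx : x ∈ Metric.closedBall (0 : E) R ×ˢ Metric.closedBall (0 : E) b) :
    Function.update U n x ∈ historyBall E R b := by
  intro k
  rcases eq_or_ne k n with rfl | hkn
  · rwa [Function.update_self]
  · rw [Function.update_of_ne hkn]
    exact hU k

/-- The distance `sup_{j ≤ 0} e^{κj} (‖v_{1j} - v_{2j}‖ + ‖ψ_{1j} - ψ_{2j}‖)` between sequences over
`ℤ₀`, with `n` standing for `-j`. -/
def weightedDist (κ : ℝ) (U₁ U₂ : ℕ → E × E) : ℝ :=
  ⨆ n : ℕ, Real.exp (-κ * n) * (‖(U₁ n).1 - (U₂ n).1‖ + ‖(U₁ n).2 - (U₂ n).2‖)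

lemma weightedDist_nonneg : 0 ≤ weightedDist κ U₁ U₂ :=
  Real.iSup_nonneg fun _ => by positivity

lemma bddAbove_range_weightedDist (hκ : 0 ≤ κ) (h₁ : U₁ ∈ historyBall E R b)
    (h₂ : U₂ ∈ historyBall E R b) :
    BddAbove (Set.range fun n : ℕ =>
      Real.exp (-κ * n) * (‖(U₁ n).1 - (U₂ n).1‖ + ‖(U₁ n).2 - (U₂ n).2‖)) := by
  refine ⟨R + R + (b + b), ?_⟩
  rintro _ ⟨n, rfl⟩
  have weight_le_one : Real.exp (-κ * n) ≤ 1 :=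
    Real.exp_le_one_iff.2 (by rw [neg_mul, neg_nonpos]; positivity)
  refine (mul_le_of_le_one_left (by positivity) weight_le_one).trans (add_le_add ?_ ?_)
  · exact norm_sub_le_of_le (norm_fst_le_of_mem_historyBall h₁ n)
      (norm_fst_le_of_mem_historyBall h₂ n)
  · exact norm_sub_le_of_le (norm_snd_le_of_mem_historyBall h₁ n)
      (norm_snd_le_of_mem_historyBall h₂ n)

lemma norm_sub_add_norm_sub_le_weightedDist (hκ : 0 ≤ κ) (h₁ : U₁ ∈ historyBall E R b)
    (h₂ : U₂ ∈ historyBall E R b) (n : ℕ) :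
    ‖(U₁ n).1 - (U₂ n).1‖ + ‖(U₁ n).2 - (U₂ n).2‖ ≤
      Real.exp (κ * n) * weightedDist κ U₁ U₂ := by
  have h := le_ciSup (bddAbove_range_weightedDist hκ h₁ h₂) n
  rwa [neg_mul, Real.exp_neg, inv_mul_le_iff₀ (Real.exp_pos _)] at h

lemma weightedDist_tailSeq_le (hκ : 0 ≤ κ) (h₁ : U₁ ∈ historyBall E R b)
    (h₂ : U₂ ∈ historyBall E R b) :
    weightedDist κ (tailSeq U₁) (tailSeq U₂) ≤ Real.exp κ * weightedDist κ U₁ U₂ := by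
  refine ciSup_le fun n => ?_
  rw [neg_mul, Real.exp_neg, inv_mul_le_iff₀ (Real.exp_pos _), ← mul_assoc, ← Real.exp_add]
  have h := norm_sub_add_norm_sub_le_weightedDist hκ h₁ h₂ (n + 1)
  rwa [Nat.cast_succ, mul_add_one] at h

end PastSequences

/-! ### The slaving map -/

section Slaving

variable {E : Type*} [NormedAddCommGroup E]

/-- The operator whose fixed points `w` are the solutions of `w₀ = G(v₋₁ + w₋₁) + ψ₀`, where `w`
depends on the sequence `U = (v, ψ)` over `ℤ₀`. -/
def slavingStep (G : E → E) (w : (ℕ → E × E) → E) (U : ℕ → E × E) : E :=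
  G ((U 1).1 + w (tailSeq U)) + (U 0).2

/-- The slaving map `𝒲₀`: the limit of the iterates of `slavingStep G` started at `0`. It is
meaningful only at the sequences where they converge. -/
def slavingMap (G : E → E) (U : ℕ → E × E) : E :=
  limUnder atTop fun m => (slavingStep G)^[m] 0 U

variable {G : E → E} {w w' : (ℕ → E × E) → E} {R b M L κ : ℝ} {g : ℝ≥0}

lemma continuous_slavingStep (hG : Continuous G) (hw : Continuous w) :
    Continuous (slavingStep G w) := by
  unfold slavingStep tailSeq
  fun_prop

lemma fst_add_mem_closedBall {U : ℕ → E × E} (hU : U ∈ historyBall E R b) (n : ℕ) {x : E}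
    (hx : ‖x‖ ≤ M) : (U n).1 + x ∈ Metric.closedBall (0 : E) (R + M) :=
  mem_closedBall_zero_iff.2 (norm_add_le_of_le (norm_fst_le_of_mem_historyBall hU n) hx)

lemma norm_slavingStep_le (hRM : 0 ≤ R + M)
    (hG : LipschitzOnWith g G (Metric.closedBall 0 (R + M))) (hM : ‖G 0‖ + g * (R + M) + b ≤ M)
    (hw : ∀ U ∈ historyBall E R b, ‖w U‖ ≤ M) :
    ∀ U ∈ historyBall E R b, ‖slavingStep G w U‖ ≤ M := by
  intro U hU
  have hx := fst_add_mem_closedBall hU 1 (hw _ (tailSeq_mem_historyBall hU))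
  have hGx := hG.norm_sub_le hx (Metric.mem_closedBall_self hRM)
  rw [sub_zero] at hGx
  calc ‖slavingStep G w U‖
      ≤ ‖G ((U 1).1 + w (tailSeq U))‖ + ‖(U 0).2‖ := norm_add_le _ _
    _ ≤ ‖G 0‖ + g * ‖(U 1).1 + w (tailSeq U)‖ + b :=
        add_le_add ((norm_le_norm_add_norm_sub' _ _).trans (by gcongr))
          (norm_snd_le_of_mem_historyBall hU 0)
    _ ≤ ‖G 0‖ + g * (R + M) + b := by gcongr; exact mem_closedBall_zero_iff.1 hx
    _ ≤ M := hM

lemma norm_slavingStep_sub_slavingStep_le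
    (hG : LipschitzOnWith g G (Metric.closedBall 0 (R + M)))
    (hw : ∀ U ∈ historyBall E R b, ‖w U‖ ≤ M) (hw' : ∀ U ∈ historyBall E R b, ‖w' U‖ ≤ M)
    {δ : ℝ} (hδ : ∀ U ∈ historyBall E R b, ‖w U - w' U‖ ≤ δ) :
    ∀ U ∈ historyBall E R b, ‖slavingStep G w U - slavingStep G w' U‖ ≤ g * δ := by
  intro U hU
  have hU' := tailSeq_mem_historyBall hU
  have h := hG.norm_sub_le (fst_add_mem_closedBall hU 1 (hw _ hU'))
    (fst_add_mem_closedBall hU 1 (hw' _ hU'))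
  rw [add_sub_add_left_eq_sub] at h
  rw [slavingStep, slavingStep, add_sub_add_right_eq_sub]
  exact h.trans (by gcongr; exact hδ _ hU')

lemma norm_slavingStep_sub_le_weightedDist (hκ : 0 ≤ κ) (hL₀ : 0 ≤ L)
    (hL : g * Real.exp κ * (1 + L) + 1 ≤ L)
    (hG : LipschitzOnWith g G (Metric.closedBall 0 (R + M)))
    (hw : ∀ U ∈ historyBall E R b, ‖w U‖ ≤ M)
    (hwL : ∀ U₁ ∈ historyBall E R b, ∀ U₂ ∈ historyBall E R b,
      ‖w U₁ - w U₂‖ ≤ L * weightedDist κ U₁ U₂) :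
    ∀ U₁ ∈ historyBall E R b, ∀ U₂ ∈ historyBall E R b,
      ‖slavingStep G w U₁ - slavingStep G w U₂‖ ≤ L * weightedDist κ U₁ U₂ := by
  intro U₁ h₁ U₂ h₂
  set D := weightedDist κ U₁ U₂
  have h₁' := tailSeq_mem_historyBall h₁
  have h₂' := tailSeq_mem_historyBall h₂
  have noise_le : ‖(U₁ 0).2 - (U₂ 0).2‖ ≤ D :=
    (le_add_of_nonneg_left (norm_nonneg _)).trans
      (by simpa using norm_sub_add_norm_sub_le_weightedDist hκ h₁ h₂ 0)
  have low_le : ‖(U₁ 1).1 - (U₂ 1).1‖ ≤ Real.exp κ * D :=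
    (le_add_of_nonneg_right (norm_nonneg _)).trans
      (by simpa using norm_sub_add_norm_sub_le_weightedDist hκ h₁ h₂ 1)
  have past_le : ‖w (tailSeq U₁) - w (tailSeq U₂)‖ ≤ L * (Real.exp κ * D) :=
    (hwL _ h₁' _ h₂').trans (by gcongr; exact weightedDist_tailSeq_le hκ h₁ h₂)
  have map_le := hG.norm_sub_le (fst_add_mem_closedBall h₁ 1 (hw _ h₁'))
    (fst_add_mem_closedBall h₂ 1 (hw _ h₂'))
  rw [add_sub_add_comm] at map_le
  calc ‖slavingStep G w U₁ - slavingStep G w U₂‖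
      ≤ ‖G ((U₁ 1).1 + w (tailSeq U₁)) - G ((U₂ 1).1 + w (tailSeq U₂))‖
          + ‖(U₁ 0).2 - (U₂ 0).2‖ := by
        rw [slavingStep, slavingStep, add_sub_add_comm]
        exact norm_add_le _ _
    _ ≤ g * (Real.exp κ * D + L * (Real.exp κ * D)) + D :=
        add_le_add (map_le.trans (by gcongr; exact norm_add_le_of_le low_le past_le)) noise_le
    _ = (g * Real.exp κ * (1 + L) + 1) * D := by ring
    _ ≤ L * D := mul_le_mul_of_nonneg_right hL weightedDist_nonneg

/-- The conditions under which `slavingStep G` maps the functions on `historyBall E R b` bounded by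
`M` to themselves and contracts their distances by the factor `g`. -/
structure SlavingContraction (G : E → E) (R b M : ℝ) (g : ℝ≥0) : Prop where
  radius_nonneg : 0 ≤ R
  bound_nonneg : 0 ≤ M
  lt_one : g < 1
  lipschitzOnWith : LipschitzOnWith g G (Metric.closedBall 0 (R + M))
  bound : ‖G 0‖ + g * (R + M) + b ≤ M

lemma continuous_iterate_slavingStep (hG : Continuous G) (m : ℕ) :
    Continuous ((slavingStep G)^[m] 0) := by
  induction m with
  | zero => exact continuous_zero
  | succ m ih => rw [Function.iterate_succ_apply']; exact continuous_slavingStep hG ih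

namespace SlavingContraction

lemma norm_iterate_le (hG : SlavingContraction G R b M g) (m : ℕ) :
    ∀ U ∈ historyBall E R b, ‖(slavingStep G)^[m] 0 U‖ ≤ M := by
  induction m with
  | zero => simpa using fun _ _ => hG.bound_nonneg
  | succ m ih =>
    rw [Function.iterate_succ_apply']
    exact norm_slavingStep_le (add_nonneg hG.radius_nonneg hG.bound_nonneg) hG.lipschitzOnWith
      hG.bound ih

lemma dist_iterate_succ_le (hG : SlavingContraction G R b M g) (m : ℕ) :
    ∀ U ∈ historyBall E R b,
      dist ((slavingStep G)^[m] 0 U) ((slavingStep G)^[m + 1] 0 U) ≤ M * g ^ m := by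
  simp only [dist_eq_norm]
  induction m with
  | zero => simpa using hG.norm_iterate_le 1
  | succ m ih =>
    intro U hU
    rw [Function.iterate_succ_apply', Function.iterate_succ_apply' _ (m + 1), pow_succ',
      mul_left_comm]
    exact norm_slavingStep_sub_slavingStep_le hG.lipschitzOnWith (hG.norm_iterate_le m)
      (hG.norm_iterate_le (m + 1)) ih U hU

lemma norm_iterate_sub_le_weightedDist (hG : SlavingContraction G R b M g) (hκ : 0 ≤ κ)
    (hL₀ : 0 ≤ L) (hL : g * Real.exp κ * (1 + L) + 1 ≤ L) (m : ℕ) :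
    ∀ U₁ ∈ historyBall E R b, ∀ U₂ ∈ historyBall E R b,
      ‖(slavingStep G)^[m] 0 U₁ - (slavingStep G)^[m] 0 U₂‖ ≤ L * weightedDist κ U₁ U₂ := by
  induction m with
  | zero => simpa using fun _ _ _ _ => mul_nonneg hL₀ weightedDist_nonneg
  | succ m ih =>
    rw [Function.iterate_succ_apply']
    exact norm_slavingStep_sub_le_weightedDist hκ hL₀ hL hG.lipschitzOnWith
      (hG.norm_iterate_le m) ih

variable [CompleteSpace E]

lemma tendsto_iterate (hG : SlavingContraction G R b M g) {U : ℕ → E × E}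
    (hU : U ∈ historyBall E R b) :
    Tendsto (fun m => (slavingStep G)^[m] 0 U) atTop (𝓝 (slavingMap G U)) :=
  (cauchySeq_of_le_geometric g M hG.lt_one fun m =>
    hG.dist_iterate_succ_le m U hU).tendsto_limUnder

lemma tendstoUniformlyOn_iterate (hG : SlavingContraction G R b M g) :
    TendstoUniformlyOn (fun m => (slavingStep G)^[m] 0) (slavingMap G) atTop
      (historyBall E R b) := by
  have pow_tendsto_zero := tendsto_pow_atTop_nhds_zero_of_lt_one g.coe_nonneg hG.lt_one
  have geometric_tendsto_zero : Tendsto (fun m : ℕ => M * (g : ℝ) ^ m / (1 - g)) atTop (𝓝 0) := by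
    simpa using (pow_tendsto_zero.const_mul M).div_const (1 - (g : ℝ))
  rw [Metric.tendstoUniformlyOn_iff]
  intro ε hε
  filter_upwards [geometric_tendsto_zero.eventually_lt_const hε] with m hm U hU
  rw [dist_comm]
  exact (dist_le_of_le_geometric_of_tendsto g M hG.lt_one
    (fun k => hG.dist_iterate_succ_le k U hU) (hG.tendsto_iterate hU) m).trans_lt hm

theorem continuousOn_slavingMap (hG : SlavingContraction G R b M g) (hGc : Continuous G) :
    ContinuousOn (slavingMap G) (historyBall E R b) :=
  hG.tendstoUniformlyOn_iterate.continuousOn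
    (Frequently.of_forall fun m => (continuous_iterate_slavingStep hGc m).continuousOn)

theorem slavingStep_slavingMap_eqOn (hG : SlavingContraction G R b M g) (hGc : Continuous G) :
    Set.EqOn (slavingStep G (slavingMap G)) (slavingMap G) (historyBall E R b) := by
  intro U hU
  have step_continuous : Continuous fun x => G ((U 1).1 + x) + (U 0).2 := by fun_prop
  have tail_tendsto := hG.tendsto_iterate (tailSeq_mem_historyBall hU)
  have succ_tendsto := (hG.tendsto_iterate hU).comp (tendsto_add_atTop_nat 1)
  refine tendsto_nhds_unique ((step_continuous.tendsto _).comp tail_tendsto)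
    (succ_tendsto.congr fun m => ?_)
  rw [Function.comp_apply, Function.iterate_succ_apply']
  rfl

theorem norm_slavingMap_sub_le_weightedDist (hG : SlavingContraction G R b M g) (hκ : 0 ≤ κ)
    (hL₀ : 0 ≤ L) (hL : g * Real.exp κ * (1 + L) + 1 ≤ L) {U₁ U₂ : ℕ → E × E}
    (h₁ : U₁ ∈ historyBall E R b) (h₂ : U₂ ∈ historyBall E R b) :
    ‖slavingMap G U₁ - slavingMap G U₂‖ ≤ L * weightedDist κ U₁ U₂ :=
  le_of_tendsto ((hG.tendsto_iterate h₁).sub (hG.tendsto_iterate h₂)).norm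
    (Eventually.of_forall fun m =>
      hG.norm_iterate_sub_le_weightedDist hκ hL₀ hL m U₁ h₁ U₂ h₂)

end SlavingContraction

theorem contDiffOn_comp_update_of_slavingStep_eqOn [NormedSpace ℝ E] {k : WithTop ℕ∞}
    (hG : ContDiff ℝ k G) (hw : Set.EqOn (slavingStep G w) w (historyBall E R b)) (n : ℕ) :
    ∀ U ∈ historyBall E R b, ContDiffOn ℝ k (fun x : E × E => w (Function.update U n x))
      (Metric.closedBall (0 : E) R ×ˢ Metric.closedBall (0 : E) b) := by
  induction n with
  | zero =>
    intro U hU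
    refine ((contDiff_const.add contDiff_snd).contDiffOn
      (f := fun x : E × E => G ((U 1).1 + w (tailSeq U)) + x.2)).congr fun x hx => ?_
    rw [← hw (update_mem_historyBall hU 0 hx)]
    simp [slavingStep]
  | succ n ih =>
    intro U hU
    have low_contDiff : ContDiff ℝ k fun x : E × E => (Function.update U (n + 1) x 1).1 := by
      simp only [Function.update_apply]
      split_ifs
      exacts [contDiff_fst, contDiff_const]
    refine ((hG.comp_contDiffOn (low_contDiff.contDiffOn.add
      (ih _ (tailSeq_mem_historyBall hU)))).add (contDiffOn_const (c := (U 0).2))).congr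
        fun x hx => ?_
    rw [← hw (update_mem_historyBall hU (n + 1) hx)]
    simp [slavingStep]

end Slaving

/-! ### Low and high modes -/

section Modes

variable {E : Type} [NormedAddCommGroup E] [InnerProductSpace ℝ E]

/-- The space `H_N` of low modes, spanned by the first `N` vectors of the basis. -/
def lowModes (e : HilbertBasis ℕ ℝ E) (N : ℕ) : Submodule ℝ E :=
  Submodule.span ℝ (e '' Finset.range N)

instance (e : HilbertBasis ℕ ℝ E) (N : ℕ) : FiniteDimensional ℝ (lowModes e N) :=
  FiniteDimensional.span_of_finite ℝ ((Finset.finite_toSet _).image e)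

/-- The map `(I - 𝖯_N) S`, the high modes of `S`. -/
def highModeMap (S : E → E) (e : HilbertBasis ℕ ℝ E) (N : ℕ) (u : E) : E :=
  (lowModes e N)ᗮ.starProjection (S u)

variable {S : E → E} {e : HilbertBasis ℕ ℝ E} {N : ℕ} {R b : ℝ}

lemma projB_eq_starProjection (e : HilbertBasis ℕ ℝ E) (N : ℕ) (u : E) :
    projB e N u = (lowModes e N).starProjection u := by
  refine (Submodule.eq_starProjection_of_mem_orthogonal ?_ ?_).symm
  · exact Submodule.sum_mem _ fun j hj =>
      Submodule.smul_mem _ _ (Submodule.subset_span (Set.mem_image_of_mem e hj))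
  · refine Submodule.isOrtho_span.2 ?_ (Submodule.mem_span_singleton_self _)
    rintro _ rfl _ ⟨j, hj, rfl⟩
    rw [projB, real_inner_comm, inner_sub_right, e.orthonormal.inner_right_sum _ hj,
      e.repr_apply_apply, sub_self]

lemma sub_projB_eq_starProjection (e : HilbertBasis ℕ ℝ E) (N : ℕ) (u : E) :
    u - projB e N u = (lowModes e N)ᗮ.starProjection u := by
  rw [projB_eq_starProjection, Submodule.starProjection_orthogonal_val]

lemma projB_eq_zero_iff {u : E} : projB e N u = 0 ↔ u ∈ (lowModes e N)ᗮ := by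
  rw [projB_eq_starProjection, Submodule.starProjection_apply_eq_zero_iff]

lemma projB_eq_self_iff {u : E} : projB e N u = u ↔ u ∈ lowModes e N := by
  rw [projB_eq_starProjection, Submodule.starProjection_eq_self_iff]

lemma projB_add_of_mem_of_mem_orthogonal {v w : E} (hv : v ∈ lowModes e N)
    (hw : w ∈ (lowModes e N)ᗮ) : projB e N (v + w) = v := by
  rw [projB_eq_starProjection, map_add, Submodule.starProjection_eq_self_iff.2 hv,
    (Submodule.starProjection_apply_eq_zero_iff _).2 hw, add_zero]

lemma CondC.eventually_lipschitzOnWith (hC : CondC S e) {ρ : ℝ} (hρ : 0 < ρ) {δ : ℝ≥0}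
    (hδ : 0 < δ) :
    ∀ᶠ N in atTop, LipschitzOnWith δ (highModeMap S e N) (Metric.closedBall 0 ρ) := by
  obtain ⟨γ, -, -, hγ_tendsto, hγ⟩ := hC ρ hρ
  filter_upwards [hγ_tendsto.eventually_le_const (NNReal.coe_pos.2 hδ)] with N hN
  refine LipschitzOnWith.of_dist_le_mul fun u₁ h₁ u₂ h₂ => ?_
  rw [dist_eq_norm, dist_eq_norm, highModeMap, highModeMap, ← map_sub,
    ← sub_projB_eq_starProjection]
  exact (hγ N u₁ h₁ u₂ h₂).trans (by gcongr)

lemma CondC.exists_eventually_slavingContraction (hC : CondC S e) (hR : 0 ≤ R) (hb : 0 ≤ b)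
    {c : ℝ} (hc : 0 < c) :
    ∃ M : ℝ, ∃ g : ℝ≥0, g ≤ c ∧
      ∀ᶠ N in atTop, SlavingContraction (highModeMap S e N) R b M g := by
  obtain ⟨M, hM⟩ : ∃ M, M = ‖S 0‖ + b + 1 := ⟨_, rfl⟩
  have hM₀ : 0 < M := hM ▸ by positivity
  have hRM : 0 < R + M := by positivity
  obtain ⟨g, hg₀, hg⟩ := exists_between (lt_min (lt_min one_pos hc) (one_div_pos.2 hRM))
  obtain ⟨⟨hg₁, hgc⟩, hgM⟩ := (lt_min_iff.trans (and_congr_left' lt_min_iff)).1 hg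
  lift g to ℝ≥0 using hg₀.le
  refine ⟨M, g, hgc.le, ?_⟩
  filter_upwards [hC.eventually_lipschitzOnWith hRM (NNReal.coe_pos.1 hg₀)] with N hN
  have norm_le : ‖highModeMap S e N 0‖ ≤ ‖S 0‖ := Submodule.norm_starProjection_apply_le _ _
  have mul_le_one : g * (R + M) ≤ 1 := ((lt_div_iff₀ hRM).1 hgM).le
  exact ⟨hR, hM₀.le, NNReal.coe_lt_coe.1 hg₁, hN, by linarith⟩

variable [CompleteSpace E]

lemma ballRB_subset_closedBall_prod :
    ballRB e N R b ⊆ Metric.closedBall (0 : E) R ×ˢ Metric.closedBall (0 : E) b :=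
  fun _ hx => ⟨mem_closedBall_zero_iff.2 hx.1, mem_closedBall_zero_iff.2 hx.2.2.1⟩

lemma ballSeq_subset_historyBall : ballSeq e N R b ⊆ historyBall E R b :=
  fun _ hU n => ballRB_subset_closedBall_prod (hU n)

lemma consSeq_mem_ballSeq {x : E × E} {U : ℕ → E × E} (hx : x ∈ ballRB e N R b)
    (hU : U ∈ ballSeq e N R b) : consSeq x U ∈ ballSeq e N R b
  | 0 => hx
  | n + 1 => hU n

lemma projB_prodMk_sub_projB_mem_ballRB {u h : E} (hu : ‖u‖ ≤ R) (hh : ‖h‖ ≤ b) :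
    (projB e N u, h - projB e N h) ∈ ballRB e N R b := by
  simp only [ballRB, Set.mem_ofPred_eq, projB_eq_self_iff, projB_eq_zero_iff,
    sub_projB_eq_starProjection]
  rw [projB_eq_starProjection]
  exact ⟨(Submodule.norm_starProjection_apply_le _ _).trans hu,
    Submodule.starProjection_apply_mem _ _,
    (Submodule.norm_starProjection_apply_le _ _).trans hh, Submodule.starProjection_apply_mem _ _⟩

end Modes

/-! ### The reduced chain -/

section Reduction

variable {E : Type} [NormedAddCommGroup E] [InnerProductSpace ℝ E]

/-- One step `𝐔 ↦ (𝐔, T(𝐔) + (𝖯_N h, (I - 𝖯_N) h))` of the reduced chain `ϒ`, for the value `h` of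
the noise. -/
def reducedStep (S : E → E) (e : HilbertBasis ℕ ℝ E) (N : ℕ) (W : (ℕ → E × E) → E) (h : E)
    (U : ℕ → E × E) : ℕ → E × E :=
  consSeq ((projB e N (S ((U 0).1 + W U)), (0 : E)) + (projB e N h, h - projB e N h)) U

variable {S : E → E} {e : HilbertBasis ℕ ℝ E} {N : ℕ} {R b : ℝ} {W : (ℕ → E × E) → E}

lemma reducedStep_eq_consSeq (h : E) (U : ℕ → E × E) :
    reducedStep S e N W h U =
      consSeq (projB e N (S ((U 0).1 + W U) + h), h - projB e N h) U := by
  simp only [reducedStep, projB_eq_starProjection, map_add, Prod.mk_add_mk, zero_add]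

variable [CompleteSpace E]

lemma reducedStep_mem_ballSeq {U : ℕ → E × E} {h : E} (hU : U ∈ ballSeq e N R b)
    (hR : ‖S ((U 0).1 + W U) + h‖ ≤ R) (hb : ‖h‖ ≤ b) :
    reducedStep S e N W h U ∈ ballSeq e N R b := by
  rw [reducedStep_eq_consSeq]
  exact consSeq_mem_ballSeq (projB_prodMk_sub_projB_mem_ballRB hR hb) hU

lemma fst_reducedStep_add {U : ℕ → E × E} {h : E}
    (hW : Set.EqOn (slavingStep (highModeMap S e N) W) W (ballSeq e N R b))
    (hU : reducedStep S e N W h U ∈ ballSeq e N R b) :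
    (reducedStep S e N W h U 0).1 + W (reducedStep S e N W h U) = S ((U 0).1 + W U) + h := by
  rw [← hW hU, reducedStep_eq_consSeq, slavingStep, tailSeq_consSeq, highModeMap,
    ← sub_projB_eq_starProjection]
  simp only [consSeq, projB_eq_starProjection, map_add]
  abel

lemma slaving_mem_orthogonal {U : ℕ → E × E}
    (hW : Set.EqOn (slavingStep (highModeMap S e N) W) W (ballSeq e N R b))
    (hU : U ∈ ballSeq e N R b) : W U ∈ (lowModes e N)ᗮ := by
  rw [← hW hU]
  exact add_mem (Submodule.starProjection_apply_mem _ _) (projB_eq_zero_iff.1 (hU 0).2.2.2)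

lemma mem_ballSeq_and_eq_fst_add
    (hW : Set.EqOn (slavingStep (highModeMap S e N) W) W (ballSeq e N R b))
    {u h : ℕ → E} {Y : ℕ → ℕ → E × E} (hu : ∀ k, u (k + 1) = S (u k) + h (k + 1))
    (huR : ∀ k, ‖u k‖ ≤ R) (hb : ∀ k, ‖h k‖ ≤ b)
    (hY : ∀ k, Y (k + 1) = reducedStep S e N W (h (k + 1)) (Y k))
    (hY₀ : Y 0 ∈ ballSeq e N R b) (hu₀ : u 0 = (Y 0 0).1 + W (Y 0)) (k : ℕ) :
    Y k ∈ ballSeq e N R b ∧ u k = (Y k 0).1 + W (Y k) := by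
  induction k with
  | zero => exact ⟨hY₀, hu₀⟩
  | succ k ih =>
    obtain ⟨hYk, huk⟩ := ih
    have hu_succ : u (k + 1) = S ((Y k 0).1 + W (Y k)) + h (k + 1) := huk ▸ hu k
    have hY_succ : reducedStep S e N W (h (k + 1)) (Y k) ∈ ballSeq e N R b :=
      reducedStep_mem_ballSeq hYk (hu_succ ▸ huR (k + 1)) (hb (k + 1))
    rw [hY, hu_succ, fst_reducedStep_add hW hY_succ]
    exact ⟨hY_succ, rfl⟩

lemma projB_eq_fst_of_lt
    (hW : Set.EqOn (slavingStep (highModeMap S e N) W) W (ballSeq e N R b))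
    {u h : ℕ → E} {Y : ℕ → ℕ → E × E}
    (hY : ∀ k, Y (k + 1) = reducedStep S e N W (h (k + 1)) (Y k))
    (hYu : ∀ k, Y k ∈ ballSeq e N R b ∧ u k = (Y k 0).1 + W (Y k)) {i k : ℕ} (hik : i < k) :
    projB e N (u (i + 1)) = (Y k (k - 1 - i)).1 := by
  obtain ⟨hYi, hui⟩ := hYu (i + 1)
  have shift : Y k (k - 1 - i) = Y (i + 1) 0 := by
    have h := apply_add_of_eq_consSeq hY (i + 1) (k - 1 - i)
    rwa [show i + 1 + (k - 1 - i) = k by omega] at h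
  rw [shift, hui]
  exact projB_add_of_mem_of_mem_orthogonal (projB_eq_self_iff.1 (hYi 0).2.1)
    (slaving_mem_orthogonal hW hYi)

end Reduction

section Attainability

lemma add_mem_attainDom {X : Type*} [AddCommGroup X] [TopologicalSpace X] [ContinuousAdd X]
    {S : X → X} (hS : Continuous S) {K B : Set X} {u h : X} (hu : u ∈ attainDom S K B)
    (hh : h ∈ K) : S u + h ∈ attainDom S K B := by
  have step_continuous : Continuous fun x => S x + h := by fun_prop
  refine map_mem_closure (f := fun x => S x + h) step_continuous hu fun x hx => ?_
  obtain ⟨n, hn⟩ := Set.mem_iUnion.1 hx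
  exact Set.mem_iUnion.2 ⟨n + 1, Set.add_mem_add (Set.mem_image_of_mem S hn) hh⟩

lemma traj_mem_attainDom {E : Type} [NormedAddCommGroup E] {Ω : Type*}
    {S : E → E} (hS : Continuous S) {K B : Set E} {η : ℕ → Ω → E} {u₀ : Ω → E} {ω : Ω}
    (hη : ∀ k, η k ω ∈ K) (hu₀ : u₀ ω ∈ attainDom S K B) (k : ℕ) :
    traj S η u₀ k ω ∈ attainDom S K B := by
  induction k with
  | zero => exact hu₀
  | succ k ih => exact add_mem_attainDom hS ih (hη (k + 1))

end Attainability

/-! ### The noise -/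

section Noise

lemma norm_le_sqrt_tsum_sq_of_hasSum_smul {ι E : Type*} [NormedAddCommGroup E]
    [InnerProductSpace ℝ E] {v : ι → E} (hv : Orthonormal ℝ v) {b c : ι → ℝ} {x : E}
    (hx : HasSum (fun j => c j • v j) x) (hb : Summable fun j => b j ^ 2)
    (hc : ∀ j, |c j| ≤ b j) : ‖x‖ ≤ √(∑' j, b j ^ 2) := by
  refine le_of_tendsto hx.norm (Eventually.of_forall fun s => Real.le_sqrt_of_sq_le ?_)
  calc ‖∑ j ∈ s, c j • v j‖ ^ 2 = ∑ j ∈ s, c j ^ 2 := by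
        rw [← real_inner_self_eq_norm_sq, hv.inner_sum]
        simp [sq]
    _ ≤ ∑ j ∈ s, b j ^ 2 := Finset.sum_le_sum fun j _ => sq_le_sq.2 ((hc j).trans (le_abs_self _))
    _ ≤ ∑' j, b j ^ 2 := hb.sum_le_tsum s fun j _ => sq_nonneg (b j)

lemma identDistrib_of_hasSum_smul {Ω Ω' E : Type*} [MeasurableSpace Ω] [MeasurableSpace Ω']
    {μ : Measure Ω} {ν : Measure Ω'} [NormedAddCommGroup E] [NormedSpace ℝ E] [CompleteSpace E]
    [SecondCountableTopology E] [MeasurableSpace E] [BorelSpace E] {X : ℕ → Ω → ℝ}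
    {Y : ℕ → Ω' → ℝ} (hXY : ∀ j, IdentDistrib (X j) (Y j) μ ν) (hX : iIndepFun X μ)
    (hY : iIndepFun Y ν) {x : ℕ → E} {ζ : Ω → E} {ζ' : Ω' → E}
    (hζ : ∀ ω, HasSum (fun j => X j ω • x j) (ζ ω))
    (hζ' : ∀ ω, HasSum (fun j => Y j ω • x j) (ζ' ω)) : IdentDistrib ζ ζ' μ ν := by
  let sum : (ℕ → ℝ) → E := fun a => limUnder atTop fun n => ∑ j ∈ Finset.range n, a j • x j
  have sum_measurable : Measurable sum :=
    (StronglyMeasurable.limUnder fun n =>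
      Measurable.stronglyMeasurable (by fun_prop)).measurable
  have hζ_eq : ζ = sum ∘ fun ω j => X j ω :=
    funext fun ω => (hζ ω).tendsto_sum_nat.limUnder_eq.symm
  have hζ'_eq : ζ' = sum ∘ fun ω j => Y j ω :=
    funext fun ω => (hζ' ω).tendsto_sum_nat.limUnder_eq.symm
  rw [hζ_eq, hζ'_eq]
  exact (IdentDistrib.pi hXY hX hY).comp sum_measurable

lemma ae_mem_msupp {X : Type*} [TopologicalSpace X] [HereditarilyLindelofSpace X]
    [MeasurableSpace X] (μ : Measure X) : ∀ᵐ x ∂μ, x ∈ msupp μ := by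
  filter_upwards [Measure.support_mem_ae (μ := μ)] with x hx
  exact (Measure.mem_support_iff_forall x).1 hx

lemma ae_withDensity_mem_of_support_subset {α : Type*} [MeasurableSpace α] {μ : Measure α}
    {p : α → ℝ} (hp : Measurable p) {s : Set α} (hps : Function.support p ⊆ s) :
    ∀ᵐ x ∂μ.withDensity fun x => ENNReal.ofReal (p x), x ∈ s := by
  rw [ae_withDensity_iff hp.ennreal_ofReal]
  exact Eventually.of_forall fun x hx => hps fun hpx => hx (by rw [hpx, ENNReal.ofReal_zero])

variable {E : Type} [NormedAddCommGroup E] [InnerProductSpace ℝ E] [MeasurableSpace E] {Ω : Type*}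
  [MeasurableSpace Ω] {P : Measure Ω} {e : HilbertBasis ℕ ℝ E} {η : ℕ → Ω → E} {b : ℕ → ℝ}
  {ξ : ℕ → ℕ → Ω → ℝ} {p : ℕ → ℝ → ℝ}

lemma CondD.identDistrib [CompleteSpace E] [SecondCountableTopology E] [BorelSpace E]
    (hD : CondD P e η b ξ p) (k l : ℕ) : IdentDistrib (η k) (η l) P P := by
  obtain ⟨-, -, hsum, hmeas, hind, hlaw, -⟩ := hD
  have coord_indep (m : ℕ) : iIndepFun (fun j => ξ j m) P :=
    hind.precomp (g := fun j => (j, m)) (Prod.mk_left_injective m)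
  have coord_identDistrib (j : ℕ) : IdentDistrib (ξ j k) (ξ j l) P P :=
    ⟨(hmeas j k).aemeasurable, (hmeas j l).aemeasurable, by rw [hlaw, hlaw]⟩
  have hasSum (m : ℕ) (ω : Ω) : HasSum (fun j => ξ j m ω • b j • e j) (η m ω) := by
    simpa only [smul_smul, mul_comm] using hsum m ω
  exact identDistrib_of_hasSum_smul coord_identDistrib (coord_indep k) (coord_indep l)
    (hasSum k) (hasSum l)

lemma CondD.ae_mem_msupp [CompleteSpace E] [SecondCountableTopology E] [BorelSpace E]
    (hD : CondD P e η b ξ p) (k l : ℕ) : ∀ᵐ ω ∂P, η k ω ∈ msupp (Measure.map (η l) P) := by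
  have h := hD.identDistrib k l
  exact ae_of_ae_map h.aemeasurable_fst (h.map_eq ▸ _root_.ae_mem_msupp _)

lemma CondD.ae_norm_le (hD : CondD P e η b ξ p) (k : ℕ) :
    ∀ᵐ ω ∂P, ‖η k ω‖ ≤ √(∑' j, b j ^ 2) := by
  obtain ⟨hb₀, hb, hsum, hmeas, -, hlaw, hlip, -, hsupp⟩ := hD
  have coord_mem (j : ℕ) : ∀ᵐ ω ∂P, ξ j k ω ∈ Set.Icc (-1 : ℝ) 1 := by
    obtain ⟨L, hL⟩ := hlip j
    refine ae_of_ae_map (hmeas j k).aemeasurable ?_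
    rw [hlaw]
    exact ae_withDensity_mem_of_support_subset hL.continuous.measurable (hsupp j)
  filter_upwards [ae_all_iff.2 coord_mem] with ω hω
  refine norm_le_sqrt_tsum_sq_of_hasSum_smul e.orthonormal (hsum k ω) hb fun j => ?_
  rw [abs_mul, abs_of_nonneg (hb₀ j)]
  exact mul_le_of_le_one_right (hb₀ j) (abs_le.2 (hω j))

end Noise

/-! ### The Lyapunov–Schmidt reduction -/

lemma ae_mem_ballSeq_and_projB_traj_eq {E : Type} [NormedAddCommGroup E] [InnerProductSpace ℝ E]
    [CompleteSpace E] {Ω : Type*} [MeasurableSpace Ω] {P : Measure Ω} {S : E → E}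
    {e : HilbertBasis ℕ ℝ E} {N : ℕ} {R b : ℝ} {W : (ℕ → E × E) → E} {η : ℕ → Ω → E} {K B : Set E}
    (hS : Continuous S)
    (hW : Set.EqOn (slavingStep (highModeMap S e N) W) W (ballSeq e N R b))
    (hηK : ∀ k, ∀ᵐ ω ∂P, η k ω ∈ K) (hηb : ∀ k, ∀ᵐ ω ∂P, ‖η k ω‖ ≤ b)
    (hB : attainDom S K B ⊆ Metric.closedBall 0 R) {U : ℕ → E × E} (hU : U ∈ ballSeq e N R b)
    (hu : (U 0).1 + W U ∈ attainDom S K B) {Υ : ℕ → Ω → ℕ → E × E} (hΥ₀ : ∀ ω, Υ 0 ω = U)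
    (hΥ : ∀ k ω, Υ (k + 1) ω = reducedStep S e N W (η (k + 1) ω) (Υ k ω)) :
    ∀ᵐ ω ∂P, (∀ k, Υ k ω ∈ ballSeq e N R b) ∧ ∀ k, ∀ i < k,
      projB e N (traj S η (fun _ => (U 0).1 + W U) (i + 1) ω) = (Υ k ω (k - 1 - i)).1 := by
  filter_upwards [ae_all_iff.2 hηK, ae_all_iff.2 hηb] with ω hωK hωb
  have traj_le (k : ℕ) : ‖traj S η (fun _ => (U 0).1 + W U) k ω‖ ≤ R :=
    mem_closedBall_zero_iff.1 (hB (traj_mem_attainDom hS hωK hu k))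
  have slaved := mem_ballSeq_and_eq_fst_add (Y := fun k => Υ k ω) hW (fun _ => rfl) traj_le hωb
    (fun k => hΥ k ω) (hΥ₀ ω ▸ hU) (by rw [hΥ₀ ω]; rfl)
  exact ⟨fun k => (slaved k).1, fun k i hik =>
    projB_eq_fst_of_lt (h := fun k => η k ω) hW (fun m => hΥ m ω) slaved hik⟩

theorem statement17_general {E : Type} [NormedAddCommGroup E] [InnerProductSpace ℝ E]
    [CompleteSpace E] [MeasurableSpace E] {Ω : Type*} [MeasurableSpace Ω] (P : Measure Ω)
    [IsProbabilityMeasure P] {S : E → E} {e : HilbertBasis ℕ ℝ E} {η : ℕ → Ω → E} {K : Set E}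
    {b R κ : ℝ} (hS : ContDiff ℝ 1 S) (hC : CondC S e) (hηK : ∀ k, ∀ᵐ ω ∂P, η k ω ∈ K)
    (hηb : ∀ k, ∀ᵐ ω ∂P, ‖η k ω‖ ≤ b) (hR : 0 ≤ R) (hκ : 0 ≤ κ) :
    ∃ Nstar : ℕ, 1 ≤ Nstar ∧ ∀ N : ℕ, Nstar ≤ N →
      ∃ C : ℝ, 0 < C ∧
      ∃ W : (ℕ → E × E) → E,
        ContinuousOn W (ballSeq e N R b) ∧
        (∀ U ∈ ballSeq e N R b, projB e N (W U) = 0) ∧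
        (∀ U₁ ∈ ballSeq e N R b, ∀ U₂ ∈ ballSeq e N R b,
          ‖W U₁ - W U₂‖ ≤ C * weightedDist κ U₁ U₂) ∧
        (∀ U ∈ ballSeq e N R b, ∀ n : ℕ,
          ContDiffOn ℝ 1 (fun x : E × E => W (Function.update U n x)) (ballRB e N R b)) ∧
        ∀ r : ℝ, 0 ≤ r →
          attainDom S K (Metric.closedBall (0 : E) r) ⊆ Metric.closedBall (0 : E) R →
          ∀ u ∈ attainDom S K (Metric.closedBall (0 : E) r),
          ∀ U ∈ ballSeq e N R b, u = (U 0).1 + W U →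
            ∀ Υ : ℕ → Ω → (ℕ → E × E),
              (∀ ω, Υ 0 ω = U) →
              (∀ (k : ℕ) (ω : Ω), Υ (k + 1) ω = reducedStep S e N W (η (k + 1) ω) (Υ k ω)) →
              P {ω | ∀ k : ℕ, Υ k ω ∈ ballSeq e N R b} = 1 ∧
              ∀ (k : ℕ) (F : (Fin k → E) → ℝ), Measurable F →
                (∃ M : ℝ, ∀ x, |F x| ≤ M) →
                (∫ ω, F (fun i : Fin k =>
                    projB e N (traj S η (fun _ => u) (i.1 + 1) ω)) ∂P)
                  = ∫ ω, F (fun i : Fin k => ((Υ k ω) (k - 1 - i.1)).1) ∂P := by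
  obtain ⟨ω, hω⟩ := (hηb 0).exists
  obtain ⟨M, g, hgκ, hG⟩ := hC.exists_eventually_slavingContraction hR
    ((norm_nonneg _).trans hω) (c := 1 / 2 / Real.exp κ) (by positivity)
  rw [le_div_iff₀ (Real.exp_pos κ)] at hgκ
  obtain ⟨Nstar, hNstar⟩ := eventually_atTop.1 hG
  refine ⟨max 1 Nstar, le_max_left _ _, fun N hN => ?_⟩
  have hGN := hNstar N ((le_max_right _ _).trans hN)
  have hGc : ContDiff ℝ 1 (highModeMap S e N) := (lowModes e N)ᗮ.starProjection.contDiff.comp hS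
  have hfix := hGN.slavingStep_slavingMap_eqOn hGc.continuous
  have hfix' := hfix.mono (ballSeq_subset_historyBall (e := e) (N := N))
  have hL : g * Real.exp κ * (1 + 3) + 1 ≤ 3 := by linarith
  refine ⟨3, by norm_num, slavingMap (highModeMap S e N),
    (hGN.continuousOn_slavingMap hGc.continuous).mono ballSeq_subset_historyBall,
    fun U hU => projB_eq_zero_iff.2 (slaving_mem_orthogonal hfix' hU),
    fun U₁ h₁ U₂ h₂ => hGN.norm_slavingMap_sub_le_weightedDist hκ (by norm_num) hL
      (ballSeq_subset_historyBall h₁) (ballSeq_subset_historyBall h₂),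
    fun U hU n => (contDiffOn_comp_update_of_slavingStep_eqOn hGc hfix n U
      (ballSeq_subset_historyBall hU)).mono ballRB_subset_closedBall_prod, ?_⟩
  rintro r - hr _ hu U hU rfl Υ hΥ₀ hΥ
  have chain := ae_mem_ballSeq_and_projB_traj_eq hS.continuous hfix' hηK hηb hr hU hu hΥ₀ hΥ
  refine ⟨?_, fun k F _ _ => integral_congr_ae (chain.mono fun ω hω => ?_)⟩
  · rw [measure_congr (eventuallyEq_univ.2 (chain.mono fun _ hω => hω.1)), measure_univ]
  · exact congrArg F (funext fun i => hω.2 k i i.2)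

/-- **Proposition 4.3 (Lyapunov–Schmidt reduction)**: under Conditions (A)–(D), with
`b = (∑ b_j²)^{1/2}`, for any `R > 0` and `κ > 0` there is `N* ≥ 1` such that for all
`N ≥ N*` there are `C > 0` and a continuous map `𝒲₀ : 𝐁_{R,b} → H_N^⊥` which is Lipschitz in
the exponentially weighted sup metric, continuously differentiable in each coordinate
`(v_j, ψ_j)`, and reduces the chain `u_k = S(u_{k-1}) + η_k` issued from
`u = v₀ + 𝒲₀(𝐔) ∈ 𝒜(B_H(r))` to the Markov chain
`ϒ^k = (ϒ^{k-1}, T(ϒ^{k-1}) + (φ_k, ψ_k))` in the sequence space: `ϒ^k ∈ 𝐁_{R,b}` a.s. and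
`𝔼_u F(𝖯_N u₁, …, 𝖯_N u_k) = 𝔼_𝐔 F(v_{1-k}, …, v₀)` for bounded measurable `F`. -/
theorem statement17
    {H : Type} [NormedAddCommGroup H] [InnerProductSpace ℝ H] [CompleteSpace H]
    [SecondCountableTopology H] [MeasurableSpace H] [BorelSpace H]
    {Ω : Type} [MeasurableSpace Ω] (P : Measure Ω) [IsProbabilityMeasure P]
    (S : H → H) (e : HilbertBasis ℕ ℝ H)
    (η : ℕ → Ω → H) (hηmeas : ∀ k, Measurable (η k))
    (b : ℕ → ℝ) (ξ : ℕ → ℕ → Ω → ℝ) (p : ℕ → ℝ → ℝ)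
    (K : Set H) (hK : K = msupp (Measure.map (η 1) P)) (hKcomp : IsCompact K)
    (hA : CondA S) (hB : CondB S K) (hC : CondC S e) (hD : CondD P e η b ξ p)
    (R κ : ℝ) (hR : 0 < R) (hκ : 0 < κ) :
    ∃ Nstar : ℕ, 1 ≤ Nstar ∧ ∀ N : ℕ, Nstar ≤ N →
      ∃ C : ℝ, 0 < C ∧
      ∃ W : (ℕ → H × H) → H,
        -- `𝒲₀` is a continuous map `𝐁_{R,b} → H_N^⊥`
        ContinuousOn W (ballSeq e N R (Real.sqrt (∑' j, (b j) ^ 2))) ∧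
        (∀ U ∈ ballSeq e N R (Real.sqrt (∑' j, (b j) ^ 2)), projB e N (W U) = 0) ∧
        -- Lipschitz continuity in the exponentially weighted sup metric
        (∀ U₁ ∈ ballSeq e N R (Real.sqrt (∑' j, (b j) ^ 2)),
          ∀ U₂ ∈ ballSeq e N R (Real.sqrt (∑' j, (b j) ^ 2)),
          ‖W U₁ - W U₂‖ ≤ C * ⨆ n : ℕ, Real.exp (-κ * n) *
            (‖(U₁ n).1 - (U₂ n).1‖ + ‖(U₁ n).2 - (U₂ n).2‖)) ∧
        -- regularity: continuous differentiability in each coordinate `(v_j, ψ_j)`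
        (∀ U ∈ ballSeq e N R (Real.sqrt (∑' j, (b j) ^ 2)), ∀ n : ℕ,
          ContDiffOn ℝ 1 (fun x : H × H => W (Function.update U n x))
            (ballRB e N R (Real.sqrt (∑' j, (b j) ^ 2)))) ∧
        -- reduction
        ∀ r : ℝ, 0 ≤ r →
          attainDom S K (Metric.closedBall (0 : H) r) ⊆ Metric.closedBall (0 : H) R →
          ∀ u ∈ attainDom S K (Metric.closedBall (0 : H) r),
          ∀ U ∈ ballSeq e N R (Real.sqrt (∑' j, (b j) ^ 2)),
            u = (U 0).1 + W U →
            ∀ Υ : ℕ → Ω → (ℕ → H × H),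
              (∀ ω, Υ 0 ω = U) →
              (∀ (k : ℕ) (ω : Ω), Υ (k + 1) ω =
                consSeq
                  (((projB e N (S ((Υ k ω 0).1 + W (Υ k ω))), (0 : H)))
                    + (projB e N (η (k + 1) ω),
                        η (k + 1) ω - projB e N (η (k + 1) ω)))
                  (Υ k ω)) →
              P {ω | ∀ k : ℕ, Υ k ω ∈
                  ballSeq e N R (Real.sqrt (∑' j, (b j) ^ 2))} = 1 ∧
              ∀ (k : ℕ) (F : (Fin k → H) → ℝ), Measurable F →
                (∃ M : ℝ, ∀ x, |F x| ≤ M) →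
                (∫ ω, F (fun i : Fin k =>
                    projB e N (traj S η (fun _ => u) (i.1 + 1) ω)) ∂P)
                  = ∫ ω, F (fun i : Fin k => ((Υ k ω) (k - 1 - i.1)).1) ∂P := by
  exact statement17_general P hA.1 hC (fun k => hK ▸ hD.ae_mem_msupp k 1) hD.ae_norm_le hR.le hκ.le
end
end
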